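/- arXiv:2204.10462 — 8 statements merged into one kernel-verified Lean document; each statement's English description precedes it below -/
import Mathlib

section
/- For every θ = (θ₁, θ₂) in the high-frequency set T^H, the quantity χ(θ)/4 = (4 - 2 cos θ₁ - 2 cos θ₂)/4 (the symbol of the Jacobi-preconditioned five-point Laplacian) lies in the closed interval [1/2, 2]. -/
open Real Set

/-- The high-frequency set `T^H`. -/
def TH : Set (ℝ × ℝ) :=
  (Ioc (-(π/2)) (3*π/2) ×ˢ Ioc (-(π/2)) (3*π/2)) \
    (Ioc (-(π/2)) (π/2) ×ˢ Ioc (-(π/2)) (π/2))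

/-- Scaled symbol of the five-point discrete Laplacian. -/
noncomputable def chi (θ : ℝ × ℝ) : ℝ := 4 - 2 * Real.cos θ.1 - 2 * Real.cos θ.2

theorem stmt_0 : ∀ θ ∈ TH, chi θ / 4 ∈ Set.Icc (1/2 : ℝ) 2 := by
  rintro ⟨a, b⟩ ⟨⟨⟨ha1, ha2⟩, ⟨hb1, hb2⟩⟩, hn⟩
  simp only at ha1 ha2 hb1 hb2
  have key : Real.cos a ≤ 0 ∨ Real.cos b ≤ 0 := by
    by_cases h : a ≤ π / 2
    · right
      have hb : π / 2 < b := by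
        by_contra hb
        exact hn ⟨⟨ha1, h⟩, ⟨hb1, not_lt.mp hb⟩⟩
      exact Real.cos_nonpos_of_pi_div_two_le_of_le hb.le (by linarith)
    · left
      exact Real.cos_nonpos_of_pi_div_two_le_of_le (not_le.mp h).le (by linarith)
  have h1 := Real.cos_le_one a
  have h2 := Real.cos_le_one b
  have h3 := Real.neg_one_le_cos a
  have h4 := Real.neg_one_le_cos b
  simp only [chi, Set.mem_Icc]
  rcases key with h | h <;> constructor <;> linarith
end

section
/- For every real damping parameter ω, the supremum over θ ∈ T^H of |1 - ω·χ(θ)/4| is at least 3/5, and this supremum equals 3/5 if and only if ω = 4/5. In other words, the optimal LFA smoothing factor of the weighted Jacobi relaxation for the five-point Laplacian is 3/5, uniquely attained at ω = 4/5. -/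
open Real Set

theorem chi_bounds (θ : ℝ × ℝ) (h : θ ∈ TH) : 2 ≤ chi θ ∧ chi θ ≤ 8 := by
  obtain ⟨⟨⟨h1, h2⟩, ⟨h3, h4⟩⟩, h5⟩ := h
  have a1 := Real.cos_le_one θ.1
  have a2 := Real.cos_le_one θ.2
  have b1 := Real.neg_one_le_cos θ.1
  have b2 := Real.neg_one_le_cos θ.2
  unfold chi
  refine ⟨?_, by linarith⟩
  by_cases c1 : θ.1 ≤ π / 2
  · by_cases c2 : θ.2 ≤ π / 2
    · exact absurd ⟨⟨h1, c1⟩, ⟨h3, c2⟩⟩ h5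
    · have := Real.cos_nonpos_of_pi_div_two_le_of_le (x := θ.2) (by linarith) (by linarith)
      linarith
  · have := Real.cos_nonpos_of_pi_div_two_le_of_le (x := θ.1) (by linarith) (by linarith)
    linarith

theorem pi_pi_mem : ((π, π) : ℝ × ℝ) ∈ TH := by
  have := Real.pi_pos
  refine ⟨⟨⟨?_, ?_⟩, ⟨?_, ?_⟩⟩, ?_⟩
  · change -(π/2) < π; linarith
  · change π ≤ 3*π/2; linarith
  · change -(π/2) < π; linarith
  · change π ≤ 3*π/2; linarith
  · rintro ⟨⟨_, h⟩, _⟩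
    change π ≤ π/2 at h
    linarith

theorem corner_mem : ((3*π/2, 0) : ℝ × ℝ) ∈ TH := by
  have := Real.pi_pos
  refine ⟨⟨⟨?_, ?_⟩, ⟨?_, ?_⟩⟩, ?_⟩
  · change -(π/2) < 3*π/2; linarith
  · change 3*π/2 ≤ 3*π/2; linarith
  · change -(π/2) < 0; linarith
  · change 0 ≤ 3*π/2; linarith
  · rintro ⟨⟨_, h⟩, _⟩
    change 3*π/2 ≤ π/2 at h
    linarith

theorem chi_pi_pi : chi (π, π) = 8 := by
  simp only [chi, Real.cos_pi]; norm_num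

theorem chi_corner : chi (3*π/2, 0) = 2 := by
  have h : Real.cos (3*π/2) = 0 := by
    rw [show 3*π/2 = π/2 + π by ring, Real.cos_add_pi, Real.cos_pi_div_two, neg_zero]
  simp only [chi, h, Real.cos_zero]; norm_num

theorem stmt_1 (ω : ℝ) :
    3/5 ≤ sSup ((fun θ => |1 - ω * (chi θ / 4)|) '' TH) ∧
      (sSup ((fun θ => |1 - ω * (chi θ / 4)|) '' TH) = 3/5 ↔ ω = 4/5) := by
  have bdd : BddAbove ((fun θ => |1 - ω * (chi θ / 4)|) '' TH) := by
    refine ⟨1 + |ω| * 2, ?_⟩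
    rintro _ ⟨θ, hθ, rfl⟩
    obtain ⟨h1, h2⟩ := chi_bounds θ hθ
    have h3 : |ω * (chi θ / 4)| ≤ |ω| * 2 := by
      rw [abs_mul]
      refine mul_le_mul_of_nonneg_left ?_ (abs_nonneg _)
      rw [abs_le]; constructor <;> linarith
    obtain ⟨h4, h5⟩ := abs_le.mp h3
    change |1 - ω * (chi θ / 4)| ≤ _
    rw [abs_le]; constructor <;> linarith
  have e1 : |1 - ω * (8 / 4)| ≤ sSup ((fun θ => |1 - ω * (chi θ / 4)|) '' TH) :=
    le_csSup bdd ⟨(π, π), pi_pi_mem, by simp only [chi_pi_pi]⟩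
  have e2 : |1 - ω * (2 / 4)| ≤ sSup ((fun θ => |1 - ω * (chi θ / 4)|) '' TH) :=
    le_csSup bdd ⟨(3*π/2, 0), corner_mem, by simp only [chi_corner]⟩
  have f1 := neg_le_abs (1 - ω * (8 / 4))
  have f2 := le_abs_self (1 - ω * (2 / 4))
  have lower : 3/5 ≤ sSup ((fun θ => |1 - ω * (chi θ / 4)|) '' TH) := by linarith
  refine ⟨lower, fun h => ?_, fun h => le_antisymm ?_ lower⟩
  · rw [h] at e1 e2
    linarith
  · refine csSup_le ⟨_, (π, π), pi_pi_mem, rfl⟩ ?_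
    rintro _ ⟨θ, hθ, rfl⟩
    obtain ⟨h1, h2⟩ := chi_bounds θ hθ
    change |1 - ω * (chi θ / 4)| ≤ _
    rw [h, abs_le]; constructor <;> linarith
end

section
/- For every θ = (θ₁, θ₂) in the high-frequency set T^H, the quantity g_m(θ) = χ(θ)·(4 + 2 cos θ₁ + 2 cos θ₂ + cos θ₁ cos θ₂)/9 lies in the closed interval [8/9, 16/9]. -/
open Real Set

/-- Scaled symbol of the product of the bilinear mass matrix and the discrete Laplacian. -/
noncomputable def gm (θ : ℝ × ℝ) : ℝ :=
  chi θ * (4 + 2 * Real.cos θ.1 + 2 * Real.cos θ.2 + Real.cos θ.1 * Real.cos θ.2) / 9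

theorem aux_bounds (x y : ℝ) (hx : -1 ≤ x) (hx0 : x ≤ 0) (hy : -1 ≤ y) (hy1 : y ≤ 1) :
    8 ≤ (4 - 2 * x - 2 * y) * (4 + 2 * x + 2 * y + x * y) ∧
    (4 - 2 * x - 2 * y) * (4 + 2 * x + 2 * y + x * y) ≤ 16 := by
  constructor
  · have h1 : 0 ≤ (x + 1) * (-x) * (2 + y) :=
      mul_nonneg (mul_nonneg (by linarith) (by linarith)) (by linarith)
    have h2 : 0 ≤ (y + 1) * (1 - y) * (2 + x) :=
      mul_nonneg (mul_nonneg (by linarith) (by linarith)) (by linarith)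
    have h3 : 0 ≤ (x + 1) * (1 - y) := mul_nonneg (by linarith) (by linarith)
    have h4 : 0 ≤ (x + 1) * (y + 1) := mul_nonneg (by linarith) (by linarith)
    have h5 : 0 ≤ (-x) * (y + 1) := mul_nonneg (by linarith) (by linarith)
    have h6 : 0 ≤ (-x) * (1 - y) := mul_nonneg (by linarith) (by linarith)
    nlinarith
  · have h1 : 0 ≤ (x + y) ^ 2 * (6 + x + y) := mul_nonneg (sq_nonneg _) (by linarith)
    have h2 : 0 ≤ (x - y) ^ 2 * (2 - x - y) := mul_nonneg (sq_nonneg _) (by linarith)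
    nlinarith

theorem stmt_2 : ∀ θ ∈ TH, gm θ ∈ Set.Icc (8/9 : ℝ) (16/9) := by
  rintro ⟨a, b⟩ ⟨⟨ha, hb⟩, hn⟩
  simp only [mem_Ioc] at ha hb
  have key : Real.cos a ≤ 0 ∨ Real.cos b ≤ 0 := by
    by_cases h : a ≤ π / 2
    · right
      have hb2 : π / 2 < b := by
        by_contra hc
        exact hn ⟨⟨ha.1, h⟩, ⟨hb.1, not_lt.mp hc⟩⟩
      exact Real.cos_nonpos_of_pi_div_two_le_of_le hb2.le (by linarith [hb.2])
    · left
      exact Real.cos_nonpos_of_pi_div_two_le_of_le (not_le.mp h).le (by linarith [ha.2])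
  simp only [gm, chi, mem_Icc]
  rcases key with h | h
  · obtain ⟨h1, h2⟩ := aux_bounds _ _ (Real.neg_one_le_cos a) h
      (Real.neg_one_le_cos b) (Real.cos_le_one b)
    constructor <;> linarith
  · obtain ⟨h1, h2⟩ := aux_bounds _ _ (Real.neg_one_le_cos b) h
      (Real.neg_one_le_cos a) (Real.cos_le_one a)
    constructor <;> nlinarith
end

section
/- For every real damping parameter ω, the supremum over θ ∈ T^H of |1 - ω·g_m(θ)| is at least 1/3, and this supremum equals 1/3 if and only if ω = 3/4. In other words, the optimal LFA smoothing factor of the mass-based relaxation for the five-point Laplacian is 1/3, uniquely attained at ω = 3/4. -/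
open Real Set

lemma aux_lower (x y : ℝ) (hx : -1 ≤ x) (hx0 : x ≤ 0) (hy : -1 ≤ y) (hy1 : y ≤ 1) :
    8 ≤ (4 - 2*x - 2*y) * (4 + 2*x + 2*y + x*y) := by
  have h1 : 0 ≤ (4 + 2*y) * ((-x) * (1+x)) :=
    mul_nonneg (by linarith) (mul_nonneg (by linarith) (by linarith))
  have h2 : 0 ≤ (-x) * (2 * ((2-y) * (1+y))) :=
    mul_nonneg (by linarith) (by nlinarith)
  have h3 : 0 ≤ (1+x) * (8 - 4*y^2) := mul_nonneg (by linarith) (by nlinarith)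
  nlinarith

lemma aux_upper (x y : ℝ) (hx : -1 ≤ x) (hx0 : x ≤ 0) (hy : -1 ≤ y) (hy1 : y ≤ 1) :
    (4 - 2*x - 2*y) * (4 + 2*x + 2*y + x*y) ≤ 16 := by
  rcases le_total 0 y with h | h
  · have h1 : 0 ≤ ((-x) * y) * (4 - 2*x - 2*y) :=
      mul_nonneg (mul_nonneg (by linarith) h) (by linarith)
    nlinarith [sq_nonneg (x+y)]
  · have h1 : 0 ≤ (x-y)^2 * (4 - 2*x - 2*y) := mul_nonneg (sq_nonneg _) (by linarith)
    have h2 : 0 ≤ (x+y)^2 * (3 + (x+y)/2) := mul_nonneg (sq_nonneg _) (by linarith)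
    nlinarith

lemma gm_bounds (θ : ℝ × ℝ) (h : θ ∈ TH) : 8/9 ≤ gm θ ∧ gm θ ≤ 16/9 := by
  obtain ⟨a, b⟩ := θ
  simp only [TH, mem_sdiff, mem_prod, mem_Ioc, not_and_or, not_le, not_lt] at h
  obtain ⟨⟨⟨ha1, ha2⟩, hb1, hb2⟩, h⟩ := h
  have key : cos a ≤ 0 ∨ cos b ≤ 0 := by
    rcases h with (h | h) | (h | h)
    · linarith
    · left; exact cos_nonpos_of_pi_div_two_le_of_le h.le (by linarith)
    · linarith
    · right; exact cos_nonpos_of_pi_div_two_le_of_le h.le (by linarith)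
  have A := neg_one_le_cos a
  have A' := cos_le_one a
  have B := neg_one_le_cos b
  have B' := cos_le_one b
  simp only [gm, chi]
  rcases key with k | k
  · have l := aux_lower _ _ A k B B'
    have u := aux_upper _ _ A k B B'
    constructor <;> linarith
  · have l := aux_lower _ _ B k A A'
    have u := aux_upper _ _ B k A A'
    constructor <;> nlinarith

theorem stmt_3 (ω : ℝ) :
    1/3 ≤ sSup ((fun θ => |1 - ω * gm θ|) '' TH) ∧
      (sSup ((fun θ => |1 - ω * gm θ|) '' TH) = 1/3 ↔ ω = 3/4) := by
  have hp := Real.pi_pos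
  have bdd : BddAbove ((fun θ => |1 - ω * gm θ|) '' TH) := by
    refine ⟨1 + |ω| * (16/9), ?_⟩
    rintro _ ⟨θ, hθ, rfl⟩
    obtain ⟨l, u⟩ := gm_bounds θ hθ
    have h1 : |1 - ω * gm θ| ≤ |1| + |ω * gm θ| := abs_sub _ _
    rw [abs_one, abs_mul, abs_of_nonneg (by linarith : 0 ≤ gm θ)] at h1
    have := mul_le_mul_of_nonneg_left u (abs_nonneg ω)
    simp only
    linarith
  have m1 : ((π, π) : ℝ × ℝ) ∈ TH := by
    simp only [TH, mem_sdiff, mem_prod, mem_Ioc]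
    refine ⟨⟨⟨by linarith, by linarith⟩, by linarith, by linarith⟩, fun h => by linarith [h.1.2]⟩
  have m2 : ((3*π/2, π/2) : ℝ × ℝ) ∈ TH := by
    simp only [TH, mem_sdiff, mem_prod, mem_Ioc]
    refine ⟨⟨⟨by linarith, by linarith⟩, by linarith, by linarith⟩, fun h => by linarith [h.1.2]⟩
  have g1 : gm (π, π) = 8/9 := by simp [gm, chi]; norm_num
  have c : cos (3*π/2) = 0 := by
    rw [show 3*π/2 = π/2 + π by ring, cos_add_pi]; simp
  have g2 : gm (3*π/2, π/2) = 16/9 := by simp [gm, chi, c]; norm_num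
  have s1 := le_csSup bdd (mem_image_of_mem _ m1)
  have s2 := le_csSup bdd (mem_image_of_mem _ m2)
  simp only [g1, g2] at s1 s2
  have t1 := le_abs_self (1 - ω * (8/9))
  have t2 := neg_le_abs (1 - ω * (16/9))
  have lb : 1/3 ≤ sSup ((fun θ => |1 - ω * gm θ|) '' TH) := by linarith
  refine ⟨lb, fun h => by linarith, fun h => le_antisymm ?_ lb⟩
  refine csSup_le ⟨_, mem_image_of_mem _ m1⟩ ?_
  rintro _ ⟨θ, hθ, rfl⟩
  obtain ⟨l, u⟩ := gm_bounds θ hθ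
  simp only [h]
  rw [abs_le]
  constructor <;> linarith
end

section
/- For every θ = (θ₁, θ₂) in the high-frequency set T^H, the quantity g_v(θ) = χ(θ)·(7 + 2 cos θ₁ + 2 cos θ₂ + cos θ₁ cos θ₂)/24 lies in the closed interval [3/4, 4/3]. -/
open Real Set

/-- Scaled symbol of the product of the element-wise Vanka operator and the discrete Laplacian. -/
noncomputable def gv (θ : ℝ × ℝ) : ℝ :=
  chi θ * (7 + 2 * Real.cos θ.1 + 2 * Real.cos θ.2 + Real.cos θ.1 * Real.cos θ.2) / 24

theorem gv_aux (x y : ℝ) (hx : -1 ≤ x) (hx0 : x ≤ 0) (hy : -1 ≤ y) (hy1 : y ≤ 1) :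
    3/4 ≤ (4 - 2 * x - 2 * y) * (7 + 2 * x + 2 * y + x * y) / 24 ∧
    (4 - 2 * x - 2 * y) * (7 + 2 * x + 2 * y + x * y) / 24 ≤ 4/3 := by
  constructor
  · have h1 : 0 ≤ (2 + x) * ((1 - y) * (1 + y)) :=
      mul_nonneg (by linarith) (mul_nonneg (by linarith) (by linarith))
    have h2 : 0 ≤ (1 + y) * (-x * (1 + x)) :=
      mul_nonneg (by linarith) (mul_nonneg (by linarith) (by linarith))
    have h3 : 0 ≤ (1 - y) * (-x * (1 + x)) :=
      mul_nonneg (by linarith) (mul_nonneg (by linarith) (by linarith))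
    have h4 : 0 ≤ (1 - y) * (-x) := mul_nonneg (by linarith) (by linarith)
    have h5 : 0 ≤ (1 + y) * (-x) := mul_nonneg (by linarith) (by linarith)
    have h6 : 0 ≤ (1 - y) * (1 + x) := mul_nonneg (by linarith) (by linarith)
    nlinarith
  · have h1 : 0 ≤ (x + y + 2) ^ 3 := pow_nonneg (by linarith) 3
    have h2 : 0 ≤ (2 - x - y) * (x - y) ^ 2 := mul_nonneg (by linarith) (sq_nonneg _)
    nlinarith

theorem stmt_4 : ∀ θ ∈ TH, gv θ ∈ Set.Icc (3/4 : ℝ) (4/3) := by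
  rintro ⟨a, b⟩ ⟨⟨⟨ha1, ha2⟩, ⟨hb1, hb2⟩⟩, hn⟩
  simp only at ha1 ha2 hb1 hb2
  simp only [gv, chi, Set.mem_Icc]
  by_cases ha : a ≤ π / 2
  · have hb : π / 2 < b := by
      by_contra h
      exact hn ⟨⟨ha1, ha⟩, ⟨hb1, not_lt.mp h⟩⟩
    have h0 : Real.cos b ≤ 0 := Real.cos_nonpos_of_pi_div_two_le_of_le hb.le (by linarith)
    have h := gv_aux (Real.cos b) (Real.cos a) (Real.neg_one_le_cos b) h0
      (Real.neg_one_le_cos a) (Real.cos_le_one a)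
    constructor <;> nlinarith [h.1, h.2]
  · have h0 : Real.cos a ≤ 0 :=
      Real.cos_nonpos_of_pi_div_two_le_of_le (not_le.mp ha).le (by linarith)
    exact gv_aux (Real.cos a) (Real.cos b) (Real.neg_one_le_cos a) h0
      (Real.neg_one_le_cos b) (Real.cos_le_one b)
end

section
/- For every θ ∈ T^H and every ρ > 0, the value σ*(1/g_v(θ), ρ) = (1 + 2ρ)/(1 + (1 + 1/g_v(θ))ρ), corresponding to the Vanka-based Braess–Sarazin relaxation, lies in the open interval (3/4, 4/3). -/
open Real Set

/-- Third eigenvalue of the preconditioned elasticity symbol, as a function of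
`t = η/χ` and `ρ = ε/λ`. -/
noncomputable def sigmaStar (t ρ : ℝ) : ℝ := (1 + 2*ρ) / (1 + (1 + t)*ρ)

/-- Bounds on the symbol in terms of the cosines, when one cosine is nonpositive. -/
lemma poly_bounds (a b : ℝ) (ha : -1 ≤ a) (ha0 : a ≤ 0) (hb : -1 ≤ b) (hb1 : b ≤ 1) :
    18 ≤ (4 - 2 * a - 2 * b) * (7 + 2 * a + 2 * b + a * b) ∧
    (4 - 2 * a - 2 * b) * (7 + 2 * a + 2 * b + a * b) ≤ 36 := by
  constructor
  · have h1 : 0 ≤ (-a) * (1 + a) * (2 + b) :=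
      mul_nonneg (mul_nonneg (by linarith) (by linarith)) (by linarith)
    have h2 : 0 ≤ (1 - b) * (1 + b) := mul_nonneg (by linarith) (by linarith)
    have h3 : 0 ≤ (-a) * ((1 - b) * (1 + b)) := mul_nonneg (by linarith) h2
    have h4 : 0 ≤ (1 + a) * ((1 - b) * (1 + b)) := mul_nonneg (by linarith) h2
    have h5 : 0 ≤ (-a) * (1 - b) := mul_nonneg (by linarith) (by linarith)
    have h6 : 0 ≤ (1 + a) * (1 - b) := mul_nonneg (by linarith) (by linarith)
    nlinarith
  · have hp : a * b ≤ 1 := by nlinarith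
    have hc : 0 ≤ 4 - 2 * a - 2 * b := by linarith
    have := mul_nonneg hc (sub_nonneg.2 hp)
    nlinarith [sq_nonneg (a + b + 1)]

lemma cos_nonpos_aux (x : ℝ) (h1 : x ∈ Ioc (-(π/2)) (3*π/2)) (h2 : x ∉ Ioc (-(π/2)) (π/2)) :
    Real.cos x ≤ 0 := by
  have h : π / 2 < x := by
    by_contra hx
    exact h2 ⟨h1.1, not_lt.1 hx⟩
  exact Real.cos_nonpos_of_pi_div_two_le_of_le h.le (by linarith [h1.2])

lemma gv_bounds (θ : ℝ × ℝ) (h : θ ∈ TH) : 3/4 ≤ gv θ ∧ gv θ ≤ 3/2 := by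
  obtain ⟨⟨hx, hy⟩, hn⟩ := h
  unfold gv chi
  by_cases h1 : θ.1 ∈ Ioc (-(π/2)) (π/2)
  · have h2 : θ.2 ∉ Ioc (-(π/2)) (π/2) := fun h2 => hn ⟨h1, h2⟩
    obtain ⟨p, q⟩ := poly_bounds (Real.cos θ.2) (Real.cos θ.1) (Real.neg_one_le_cos _)
      (cos_nonpos_aux _ hy h2) (Real.neg_one_le_cos _) (Real.cos_le_one _)
    constructor <;> linarith
  · obtain ⟨p, q⟩ := poly_bounds (Real.cos θ.1) (Real.cos θ.2) (Real.neg_one_le_cos _)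
      (cos_nonpos_aux _ hx h1) (Real.neg_one_le_cos _) (Real.cos_le_one _)
    constructor <;> linarith

theorem stmt_11 : ∀ θ ∈ TH, ∀ ρ : ℝ, 0 < ρ →
    sigmaStar (1 / gv θ) ρ ∈ Set.Ioo (3/4 : ℝ) (4/3) := by
  intro θ hθ ρ hρ
  obtain ⟨h1, h2⟩ := gv_bounds θ hθ
  have hg : 0 < gv θ := by linarith
  have t1 : 1 / gv θ ≤ 4/3 := by rw [div_le_iff₀ hg]; linarith
  have t2 : 2/3 ≤ 1 / gv θ := by rw [le_div_iff₀ hg]; linarith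
  unfold sigmaStar
  generalize 1 / gv θ = t at t1 t2
  have a1 : t * ρ ≤ 4/3 * ρ := mul_le_mul_of_nonneg_right t1 hρ.le
  have a2 : 2/3 * ρ ≤ t * ρ := mul_le_mul_of_nonneg_right t2 hρ.le
  have hd : 0 < 1 + (1 + t) * ρ := by nlinarith
  constructor
  · rw [lt_div_iff₀ hd]; nlinarith
  · rw [div_lt_iff₀ hd]; nlinarith
end

section
/- Fix any ρ > 0. For every real damping parameter ω, the supremum over θ ∈ T^H of max{ |1 − ω|, |1 − ω·χ(θ)/4|, |1 − ω·σ*(4/χ(θ), ρ)| } (the spectral radius of the symbol of the Jacobi-Braess–Sarazin relaxation error operator) is at least 3/5, and this supremum equals 3/5 if and only if ω = 4/5. In other words, the optimal LFA smoothing factor for the Jacobi-Braess–Sarazin relaxation is 3/5, uniquely attained at ω = 4/5, independently of the Lamé constants. -/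
open Real Set

theorem sigma_bounds (ρ c : ℝ) (hρ : 0 < ρ) (h2 : 2 ≤ c) (h8 : c ≤ 8) :
    1/2 ≤ sigmaStar (4 / c) ρ ∧ sigmaStar (4 / c) ρ ≤ 2 := by
  have hc : 0 < c := by linarith
  have t1 : 1/2 ≤ 4 / c := by rw [div_le_div_iff₀ (by norm_num) hc]; linarith
  have t2 : 4 / c ≤ 2 := by rw [div_le_iff₀ hc]; linarith
  have hp : 0 < 1 + (1 + 4/c) * ρ := by positivity
  unfold sigmaStar
  constructor
  · rw [le_div_iff₀ hp]; nlinarith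
  · rw [div_le_iff₀ hp]; nlinarith

theorem abs_bound (ω x : ℝ) (h1 : 1/2 ≤ x) (h2 : x ≤ 2) :
    |1 - ω * x| ≤ max |1 - ω * (1/2)| |1 - ω * 2| := by
  rcases le_total 0 ω with h | h
  · rw [abs_le]
    constructor
    · have := (neg_le_abs (1 - ω * 2)).trans (le_max_right |1 - ω * (1/2)| _)
      nlinarith
    · have := (le_abs_self (1 - ω * (1/2))).trans (le_max_left _ |1 - ω * 2|)
      nlinarith
  · rw [abs_le]
    constructor
    · have := (neg_le_abs (1 - ω * (1/2))).trans (le_max_left _ |1 - ω * 2|)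
      nlinarith
    · have := (le_abs_self (1 - ω * 2)).trans (le_max_right |1 - ω * (1/2)| _)
      nlinarith

theorem sSup_eq (ρ : ℝ) (hρ : 0 < ρ) (ω : ℝ) :
    sSup ((fun θ =>
        max |1 - ω| (max |1 - ω * (chi θ / 4)| |1 - ω * sigmaStar (4 / chi θ) ρ|)) '' TH)
      = max |1 - ω * (1/2)| |1 - ω * 2| := by
  have hpi := Real.pi_pos
  have cos3 : Real.cos (3*π/2) = 0 := by
    rw [show 3*π/2 = π/2 + π by ring, Real.cos_add_pi, Real.cos_pi_div_two, neg_zero]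
  have m1 : ((3*π/2, 0) : ℝ × ℝ) ∈ TH := by
    refine ⟨⟨⟨?_, ?_⟩, ⟨?_, ?_⟩⟩, fun h => ?_⟩
    · show -(π/2) < 3*π/2
      linarith
    · exact le_refl (3*π/2)
    · show -(π/2) < 0
      linarith
    · show 0 ≤ 3*π/2
      linarith
    · have : 3*π/2 ≤ π/2 := h.1.2
      linarith
  have m2 : ((π, π) : ℝ × ℝ) ∈ TH := by
    refine ⟨⟨⟨?_, ?_⟩, ⟨?_, ?_⟩⟩, fun h => ?_⟩
    · show -(π/2) < π
      linarith
    · show π ≤ 3*π/2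
      linarith
    · show -(π/2) < π
      linarith
    · show π ≤ 3*π/2
      linarith
    · have : π ≤ π/2 := h.1.2
      linarith
  have v1 : chi (3*π/2, 0) / 4 = 1/2 := by
    simp only [chi, cos3, Real.cos_zero]; norm_num
  have v2 : chi (π, π) / 4 = 2 := by
    simp only [chi, Real.cos_pi]; norm_num
  have ub : ∀ y ∈ ((fun θ =>
        max |1 - ω| (max |1 - ω * (chi θ / 4)| |1 - ω * sigmaStar (4 / chi θ) ρ|)) '' TH),
        y ≤ max |1 - ω * (1/2)| |1 - ω * 2| := by
    rintro y ⟨θ, hθ, rfl⟩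
    obtain ⟨k1, k2⟩ := chi_bounds θ hθ
    obtain ⟨s1, s2⟩ := sigma_bounds ρ _ hρ k1 k2
    refine max_le ?_ (max_le ?_ ?_)
    · simpa using abs_bound ω 1 (by norm_num) (by norm_num)
    · exact abs_bound ω _ (by linarith) (by linarith)
    · exact abs_bound ω _ s1 s2
  apply le_antisymm
  · exact csSup_le ⟨_, _, m1, rfl⟩ ub
  · apply max_le
    · refine le_trans ?_ (le_csSup ⟨_, ub⟩ ⟨_, m1, rfl⟩)
      simp only [v1]
      exact (le_max_left _ _).trans (le_max_right _ _)
    · refine le_trans ?_ (le_csSup ⟨_, ub⟩ ⟨_, m2, rfl⟩)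
      simp only [v2]
      exact (le_max_left _ _).trans (le_max_right _ _)

theorem stmt_12 (ρ : ℝ) (hρ : 0 < ρ) (ω : ℝ) :
    3/5 ≤ sSup ((fun θ =>
        max |1 - ω| (max |1 - ω * (chi θ / 4)| |1 - ω * sigmaStar (4 / chi θ) ρ|)) '' TH) ∧
      (sSup ((fun θ =>
        max |1 - ω| (max |1 - ω * (chi θ / 4)| |1 - ω * sigmaStar (4 / chi θ) ρ|)) '' TH) = 3/5
        ↔ ω = 4/5) := by
  rw [sSup_eq ρ hρ ω]
  have p := (le_abs_self (1 - ω * (1/2))).trans (le_max_left _ |1 - ω * 2|)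
  have q := (neg_le_abs (1 - ω * 2)).trans (le_max_right |1 - ω * (1/2)| _)
  refine ⟨by linarith, fun h => ?_, fun h => ?_⟩
  · rw [h] at p q
    linarith
  · subst h
    norm_num [abs_of_pos, abs_of_neg]
end

section
/- Let ε > 0, η > 0, χ > 0, λ > 0, h > 0 be real numbers, set τ = (λ + ε)/λ and c = τh²/λ, and let a, b be real numbers with a² + b² = τ²h²χ. Then for every complex number σ, one has (εχ − σεη)·(σ − 1)·((εχ − σεη)c − (σ − 1)(a² + b²)) = 0 if and only if σ = 1, or σ = χ/η, or σ = (τχ + εχ/λ)/(τχ + εη/λ). In other words, the three eigenvalues of M̃⁻¹L̃ are exactly 1, χ/η, and (τχ + εχ/λ)/(τχ + εη/λ). -/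
theorem stmt_16 (ε η χ lam h a b τ c : ℝ) (hε : 0 < ε) (hη : 0 < η) (hχ : 0 < χ)
    (hlam : 0 < lam) (hh : 0 < h) (hτ : τ = (lam + ε)/lam) (hc : c = τ*h^2/lam)
    (hab : a^2 + b^2 = τ^2*h^2*χ) (σ : ℂ) :
    ((ε*χ : ℂ) - σ*(ε*η)) * (σ - 1) *
        (((ε*χ : ℂ) - σ*(ε*η))*(c : ℂ) - (σ - 1)*((a : ℂ)^2 + (b : ℂ)^2)) = 0 ↔
      σ = 1 ∨ σ = ((χ/η : ℝ) : ℂ) ∨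
        σ = (((τ*χ + ε*χ/lam)/(τ*χ + ε*η/lam) : ℝ) : ℂ) := by
  have hτ0 : 0 < τ := by rw [hτ]; positivity
  have hD : 0 < τ*χ + ε*η/lam := by positivity
  have hK : 0 < τ*h^2 := by positivity
  have hE : 0 < ε*η := by positivity
  have habC : (a:ℂ)^2 + (b:ℂ)^2 = (τ:ℂ)^2*(h:ℂ)^2*(χ:ℂ) := by exact_mod_cast hab
  have hcC : (c:ℂ) = (τ:ℂ)*(h:ℂ)^2/(lam:ℂ) := by rw [hc]; push_cast; ring
  have e1 : (ε*χ : ℂ) - σ*(ε*η) = ((ε*η : ℝ) : ℂ) * (((χ/η : ℝ) : ℂ) - σ) := by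
    have : (η:ℂ) ≠ 0 := by exact_mod_cast hη.ne'
    push_cast
    field_simp
  have e2 : ((ε*χ : ℂ) - σ*(ε*η))*(c : ℂ) - (σ - 1)*((a : ℂ)^2 + (b : ℂ)^2)
      = ((τ*h^2 : ℝ) : ℂ) * (((τ*χ + ε*η/lam : ℝ) : ℂ) *
        ((((τ*χ + ε*χ/lam)/(τ*χ + ε*η/lam) : ℝ) : ℂ) - σ)) := by
    have h3 : ((τ*χ + ε*η/lam : ℝ) : ℂ) * (((τ*χ + ε*χ/lam)/(τ*χ + ε*η/lam) : ℝ) : ℂ)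
        = ((τ*χ + ε*χ/lam : ℝ) : ℂ) := by
      rw [← Complex.ofReal_mul, mul_div_cancel₀ _ hD.ne']
    rw [mul_sub, h3, habC, hcC]
    push_cast
    ring
  have n1 := Complex.ofReal_ne_zero.mpr hE.ne'
  have n2 := Complex.ofReal_ne_zero.mpr hK.ne'
  have n3 := Complex.ofReal_ne_zero.mpr hD.ne'
  rw [e2, e1, mul_eq_zero, mul_eq_zero, mul_eq_zero, mul_eq_zero, mul_eq_zero,
    sub_eq_zero, sub_eq_zero, sub_eq_zero, eq_comm (b := σ), eq_comm (b := σ)]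
  tauto
end
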